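/- arXiv:1311.4532 — 6 statements merged into one kernel-verified Lean document; each statement's English description precedes it below -/
import Mathlib

section
/- Every complex root of the characteristic equation z + (π/2)·exp(−z) = 0 has real part at most 0; moreover, the only roots with real part equal to 0 are z = iπ/2 and z = −iπ/2, and both iπ/2 and −iπ/2 are indeed roots of this equation. -/
/-!
Write `z = x + iy`. The characteristic equation splits into `x = -(π/2) e⁻ˣ cos y` and
`y = (π/2) e⁻ˣ sin y`. For `x ≥ 0` the second equation confines `y` to `[-π/2, π/2]`, where
`cos y ≥ 0`, so the first one forces `x ≤ 0`. For `x = 0` the first equation says `cos y = 0`,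
and in that interval this leaves only the endpoints `y = ±π/2`.
-/

open Real

lemma char_root_re_im {z : ℂ} (h : z + (π / 2 : ℝ) * Complex.exp (-z) = 0) :
    z.re + π / 2 * (Real.exp (-z.re) * Real.cos z.im) = 0 ∧
    z.im - π / 2 * (Real.exp (-z.re) * Real.sin z.im) = 0 := by
  have h1 := congrArg Complex.re h
  have h2 := congrArg Complex.im h
  rw [Complex.add_re, Complex.re_ofReal_mul, Complex.exp_re, Complex.neg_re, Complex.neg_im,
    Real.cos_neg, Complex.zero_re] at h1
  rw [Complex.add_im, Complex.im_ofReal_mul, Complex.exp_im, Complex.neg_re, Complex.neg_im,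
    Real.sin_neg, Complex.zero_im] at h2
  exact ⟨h1, by linarith⟩

/-- In the closed right half-plane `e⁻ˣ ≤ 1`, so `y = (π/2) e⁻ˣ sin y` bounds `|y|` by `π/2`. -/
lemma char_root_abs_im_le {z : ℂ} (h : z + (π / 2 : ℝ) * Complex.exp (-z) = 0)
    (hx : 0 ≤ z.re) : |z.im| ≤ π / 2 := by
  have him : z.im = π / 2 * (Real.exp (-z.re) * Real.sin z.im) := by
    linarith [(char_root_re_im h).2]
  have hexp : Real.exp (-z.re) ≤ 1 := Real.exp_le_one_iff.2 (by linarith)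
  have hprod : Real.exp (-z.re) * |Real.sin z.im| ≤ 1 :=
    mul_le_one₀ hexp (abs_nonneg _) (Real.abs_sin_le_one _)
  rw [him, abs_mul, abs_mul, abs_of_pos Real.pi_div_two_pos, abs_of_pos (Real.exp_pos _)]
  exact mul_le_of_le_one_right Real.pi_div_two_pos.le hprod

/-- Every complex root of the characteristic equation `z + (π/2)·exp(−z) = 0` has
real part at most 0; the only roots with real part 0 are `z = iπ/2` and `z = −iπ/2`,
and both of these are indeed roots. -/
theorem stmt_0 :
    (∀ z : ℂ, z + (π / 2 : ℝ) * Complex.exp (-z) = 0 → z.re ≤ 0) ∧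
    (∀ z : ℂ, z + (π / 2 : ℝ) * Complex.exp (-z) = 0 → z.re = 0 →
      z = Complex.I * (π / 2 : ℝ) ∨ z = -(Complex.I * (π / 2 : ℝ))) ∧
    (Complex.I * (π / 2 : ℝ) + (π / 2 : ℝ) * Complex.exp (-(Complex.I * (π / 2 : ℝ))) = 0) ∧
    (-(Complex.I * (π / 2 : ℝ)) + (π / 2 : ℝ) * Complex.exp (-(-(Complex.I * (π / 2 : ℝ)))) = 0) := by
  refine ⟨fun z h => ?_, fun z h hx => ?_, ?_, ?_⟩
  · by_contra! hx
    obtain ⟨hl, hr⟩ := abs_le.1 (char_root_abs_im_le h hx.le)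
    have hcos : 0 ≤ Real.cos z.im := Real.cos_nonneg_of_neg_pi_div_two_le_of_le hl hr
    have hterm : 0 ≤ π / 2 * (Real.exp (-z.re) * Real.cos z.im) := by positivity
    linarith [(char_root_re_im h).1]
  · obtain ⟨hl, hr⟩ := abs_le.1 (char_root_abs_im_le h hx.ge)
    have hcos : Real.cos z.im = 0 := by
      simpa [hx, Real.pi_ne_zero] using (char_root_re_im h).1
    rcases hr.eq_or_lt with hr | hr
    · left
      apply Complex.ext
      · rw [hx, Complex.re_mul_ofReal, Complex.I_re, zero_mul]
      · rw [hr, Complex.im_mul_ofReal, Complex.I_im, one_mul]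
    rcases hl.eq_or_lt with hl | hl
    · right
      apply Complex.ext
      · rw [hx, Complex.neg_re, Complex.re_mul_ofReal, Complex.I_re, zero_mul, neg_zero]
      · rw [← hl, Complex.neg_im, Complex.im_mul_ofReal, Complex.I_im, one_mul]
    exact absurd hcos (Real.cos_pos_of_mem_Ioo ⟨hl, hr⟩).ne'
  · have hexp : Complex.exp (-(Complex.I * (π / 2 : ℝ))) = -Complex.I := by
      rw [← Complex.exp_neg_pi_div_two_mul_I]
      push_cast
      ring_nf
    rw [hexp]
    ring
  · have hexp : Complex.exp (-(-(Complex.I * (π / 2 : ℝ)))) = Complex.I := by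
      rw [neg_neg, mul_comm, Complex.ofReal_div, Complex.ofReal_ofNat,
        Complex.exp_pi_div_two_mul_I]
    rw [hexp]
    ring
end

section
/- Let ω > 0, 𝔗 = 2π/ω, and for s ∈ ℝ let R_s denote the 2×2 matrix with first row (cos(ωs), sin(ωs)) and second row (−sin(ωs), cos(ωs)). Let φ : ℝ² → ℝ be continuous and define Φ_φ(z) := (1/𝔗)·∫₀^𝔗 s·φ(R_s z) ds for z ∈ ℝ². Then for every z ∈ ℝ², the map t ↦ Φ_φ(R_t z) is differentiable at t = 0 with derivative φ(z) − (1/𝔗)·∫₀^𝔗 φ(R_s z) ds. -/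
/-!
Along the orbit of `z` the function `g s = φ (R_s z)` is continuous and `𝔗`-periodic, and by the
group law `R_s R_t = R_{s+t}` the claim concerns the weighted integral `∫₀^𝔗 s g(s+t) ds`.
Substituting `u = s + t` and using periodicity on the unweighted part, this integral equals
`G(𝔗+t) - G(t) - t ∫₀^𝔗 g`, where `G(x) = ∫₀^x u g(u) du`. The fundamental theorem of calculus then
gives the derivative `𝔗 g(𝔗) - ∫₀^𝔗 g = 𝔗 g(0) - ∫₀^𝔗 g` at `t = 0`
(`hasDerivAt_integral_mul_shift`). Thus `φ` need only be continuous.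
-/

open Real Matrix

/-- The rotation matrix `R_s` with angular velocity `ω`. -/
noncomputable def rotMat (ω s : ℝ) : Matrix (Fin 2) (Fin 2) ℝ :=
  !![Real.cos (ω * s), Real.sin (ω * s); -Real.sin (ω * s), Real.cos (ω * s)]

theorem rotMat_mul (ω s t : ℝ) : rotMat ω s * rotMat ω t = rotMat ω (s + t) := by
  ext i j
  fin_cases i <;> fin_cases j <;>
    simp [rotMat, Matrix.mul_apply, Fin.sum_univ_two, mul_add, Real.cos_add, Real.sin_add] <;> ring

theorem rotMat_zero (ω : ℝ) : rotMat ω 0 = 1 := by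
  ext i j
  fin_cases i <;> fin_cases j <;> simp [rotMat]

theorem rotMat_periodic {ω : ℝ} (hω : ω ≠ 0) : Function.Periodic (rotMat ω) (2 * π / ω) := by
  intro s
  have h : ω * (s + 2 * π / ω) = ω * s + 2 * π := by field_simp
  simp only [rotMat, h, Real.cos_add_two_pi, Real.sin_add_two_pi]

theorem continuous_rotMat (ω : ℝ) : Continuous (rotMat ω) := by
  refine continuous_matrix fun i j => ?_
  fin_cases i <;> fin_cases j <;> simp [rotMat] <;> fun_prop

/-- The shift is moved from `g`, which need not be differentiable, onto the endpoints and the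
weight. -/
theorem integral_mul_shift {g : ℝ → ℝ} (hg : Continuous g) {T : ℝ} (hT : Function.Periodic g T)
    (t : ℝ) :
    ∫ s in (0 : ℝ)..T, s * g (s + t) =
      (∫ u in (0 : ℝ)..(T + t), u * g u) - (∫ u in (0 : ℝ)..t, u * g u)
        - t * ∫ u in (0 : ℝ)..T, g u := by
  have hG : ∀ a b : ℝ, IntervalIntegrable (fun u => u * g u) MeasureTheory.volume a b :=
    fun a b => (continuous_id.mul hg).intervalIntegrable a b
  have hper : ∫ u in t..(T + t), g u = ∫ u in (0 : ℝ)..T, g u := by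
    simpa [add_comm] using hT.intervalIntegral_add_eq t 0
  calc ∫ s in (0 : ℝ)..T, s * g (s + t)
      = ∫ s in (0 : ℝ)..T, (fun u => (u - t) * g u) (s + t) := by simp
    _ = ∫ u in t..(T + t), (u - t) * g u := by
        rw [intervalIntegral.integral_comp_add_right (fun u => (u - t) * g u) t, zero_add]
    _ = ∫ u in t..(T + t), (u * g u - t * g u) := by simp only [sub_mul]
    _ = _ := by
        rw [intervalIntegral.integral_sub (hG _ _)
            ((hg.const_mul t).intervalIntegrable _ _),
          intervalIntegral.integral_const_mul, hper,
          intervalIntegral.integral_interval_sub_left (hG _ _) (hG _ _)]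

theorem hasDerivAt_integral_mul_shift {g : ℝ → ℝ} (hg : Continuous g) {T : ℝ}
    (hT : Function.Periodic g T) :
    HasDerivAt (fun t : ℝ => ∫ s in (0 : ℝ)..T, s * g (s + t))
      (T * g 0 - ∫ s in (0 : ℝ)..T, g s) 0 := by
  have hc : Continuous fun u => u * g u := continuous_id.mul hg
  have hG : ∀ x : ℝ, HasDerivAt (fun x => ∫ u in (0 : ℝ)..x, u * g u) (x * g x) x := fun x =>
    intervalIntegral.integral_hasDerivAt_right (hc.intervalIntegrable _ _)
      (hc.stronglyMeasurableAtFilter _ _) hc.continuousAt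
  have h := ((HasDerivAt.comp_const_add T 0 (hG (T + 0))).sub (hG 0)).sub
    ((hasDerivAt_id (0 : ℝ)).mul_const (∫ u in (0 : ℝ)..T, g u))
  have hT0 : g T = g 0 := by simpa using hT 0
  refine (h.congr_deriv (by simp [hT0])).congr_of_eventuallyEq (.of_forall fun t => ?_)
  exact integral_mul_shift hg hT t

/-- For `ω > 0`, `𝔗 = 2π/ω`, continuous `φ : ℝ² → ℝ`, and
`Φ_φ(z) := (1/𝔗)·∫₀^𝔗 s·φ(R_s z) ds`, the map `t ↦ Φ_φ(R_t z)` is differentiable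
at `t = 0` with derivative `φ(z) − (1/𝔗)·∫₀^𝔗 φ(R_s z) ds`. -/
theorem stmt_6 (ω : ℝ) (hω : 0 < ω) (φ : (Fin 2 → ℝ) → ℝ) (hφ : Continuous φ)
    (z : Fin 2 → ℝ) :
    HasDerivAt
      (fun t : ℝ =>
        (1 / (2 * π / ω)) *
          ∫ s in (0 : ℝ)..(2 * π / ω), s * φ (rotMat ω s *ᵥ (rotMat ω t *ᵥ z)))
      (φ z - (1 / (2 * π / ω)) * ∫ s in (0 : ℝ)..(2 * π / ω), φ (rotMat ω s *ᵥ z))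
      0 := by
  have hT : 2 * π / ω ≠ 0 := by positivity
  have hg : Continuous fun s => φ (rotMat ω s *ᵥ z) :=
    hφ.comp ((continuous_rotMat ω).matrix_mulVec continuous_const)
  have hper : Function.Periodic (fun s => φ (rotMat ω s *ᵥ z)) (2 * π / ω) :=
    (rotMat_periodic hω.ne').comp fun M => φ (M *ᵥ z)
  simp only [Matrix.mulVec_mulVec, rotMat_mul]
  refine ((hasDerivAt_integral_mul_shift hg hper).const_mul (1 / (2 * π / ω))).congr_deriv ?_
  rw [rotMat_zero, Matrix.one_mulVec, mul_sub, ← mul_assoc, one_div_mul_cancel hT, one_mul]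
end

section
/- The function b₂ is Lipschitz continuous on [0, H*]. -/
/-!
The map `ℏ ↦ √(2ℏ)` is not Lipschitz at `0`, so the drift cannot be treated factor by factor.
The weight `p s = Ψ₁ cos(ωs) − Ψ₂ sin(ωs)` has mean zero over a period, so `G` may be replaced by
`G − G 0` (`avgDrift_eq_centered`). Writing `a = √(2h₁)` and `b = √(2h₂)`, the Lipschitz bound
gives `|G η₁ − G 0| ≤ K a` and `|G η₁ − G η₂| ≤ K |a − b|`, hence
`|(G η₁ − G 0) a − (G η₂ − G 0) b| ≤ K a |a − b| + K |a − b| b = K |a² − b²| = 2 K |h₁ − h₂|`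
(`abs_centered_sub_le`). Averaging against `|p| ≤ |Ψ₁| + |Ψ₂|` gives the Lipschitz constant
`2 K (|Ψ₁| + |Ψ₂|)`, which does not depend on the upper end of the energy interval.
-/

open Real

/-- The segment `θ ↦ √(2ℏ)·cos(ω(s+θ))` of the rotating critical-eigenspace orbit
of energy `ℏ`, as a continuous function on `[−r,0]`. -/
noncomputable def orbitSeg (r ω h s : ℝ) : C(Set.Icc (-r) (0 : ℝ), ℝ) :=
  ⟨fun θ => Real.sqrt (2 * h) * Real.cos (ω * (s + (θ : ℝ))), by fun_prop⟩

/-- The averaged drift `b₂(ℏ)` obtained by averaging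
`G(η_{ℏ,s})·√(2ℏ)·(Ψ̃₁cos(ωs) − Ψ̃₂sin(ωs))` over one period `𝔗 = 2π/ω`. -/
noncomputable def avgDrift (r ω Ψ₁ Ψ₂ : ℝ) (G : C(Set.Icc (-r) (0 : ℝ), ℝ) → ℝ)
    (h : ℝ) : ℝ :=
  (1 / (2 * π / ω)) *
    ∫ s in (0 : ℝ)..(2 * π / ω),
      G (orbitSeg r ω h s) *
        (Real.sqrt (2 * h) * (Ψ₁ * Real.cos (ω * s) - Ψ₂ * Real.sin (ω * s)))

theorem continuous_orbitSeg (r ω h : ℝ) : Continuous (orbitSeg r ω h) := by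
  apply ContinuousMap.continuous_of_continuous_uncurry
  change Continuous fun x : ℝ × Set.Icc (-r) (0 : ℝ) =>
    Real.sqrt (2 * h) * Real.cos (ω * (x.1 + (x.2 : ℝ)))
  fun_prop

theorem dist_orbitSeg_le (r ω h₁ h₂ s : ℝ) :
    dist (orbitSeg r ω h₁ s) (orbitSeg r ω h₂ s) ≤ |√(2 * h₁) - √(2 * h₂)| := by
  rw [ContinuousMap.dist_le (abs_nonneg _)]
  intro θ
  change |√(2 * h₁) * cos (ω * (s + (θ : ℝ))) - √(2 * h₂) * cos (ω * (s + (θ : ℝ)))| ≤ _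
  rw [← sub_mul, abs_mul]
  exact mul_le_of_le_one_right (abs_nonneg _) (abs_cos_le_one _)

theorem dist_orbitSeg_zero_le (r ω h s : ℝ) : dist (orbitSeg r ω h s) 0 ≤ √(2 * h) := by
  have h0 : orbitSeg r ω 0 s = 0 := by
    ext θ
    simp [orbitSeg]
  simpa [h0, abs_of_nonneg (sqrt_nonneg _)] using dist_orbitSeg_le r ω h 0 s

/-- The trigonometric weight has mean zero over one period. -/
theorem integral_weight_eq_zero {ω : ℝ} (hω : 0 < ω) (Ψ₁ Ψ₂ : ℝ) :
    ∫ s in (0 : ℝ)..(2 * π / ω), (Ψ₁ * cos (ω * s) - Ψ₂ * sin (ω * s)) = 0 := by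
  have hT : ω * (2 * π / ω) = 2 * π := by field_simp
  rw [intervalIntegral.integral_comp_mul_left (fun x => Ψ₁ * cos x - Ψ₂ * sin x) hω.ne', hT,
    intervalIntegral.integral_sub
      ((by fun_prop : Continuous fun x => Ψ₁ * cos x).intervalIntegrable _ _)
      ((by fun_prop : Continuous fun x => Ψ₂ * sin x).intervalIntegrable _ _)]
  simp

/-- Since the weight has mean zero, `G` may be recentred at the zero segment. -/
theorem avgDrift_eq_centered {r ω : ℝ} (hω : 0 < ω) (Ψ₁ Ψ₂ : ℝ)
    {G : C(Set.Icc (-r) (0 : ℝ), ℝ) → ℝ} (hG : Continuous G) (h : ℝ) :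
    avgDrift r ω Ψ₁ Ψ₂ G h = (1 / (2 * π / ω)) * ∫ s in (0 : ℝ)..(2 * π / ω),
      (G (orbitSeg r ω h s) - G 0) * √(2 * h) * (Ψ₁ * cos (ω * s) - Ψ₂ * sin (ω * s)) := by
  have hc : Continuous fun s =>
      G (orbitSeg r ω h s) * (√(2 * h) * (Ψ₁ * cos (ω * s) - Ψ₂ * sin (ω * s))) :=
    (hG.comp (continuous_orbitSeg r ω h)).mul (by fun_prop)
  have key : ∀ s, (G (orbitSeg r ω h s) - G 0) * √(2 * h) *
        (Ψ₁ * cos (ω * s) - Ψ₂ * sin (ω * s)) =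
      G (orbitSeg r ω h s) * (√(2 * h) * (Ψ₁ * cos (ω * s) - Ψ₂ * sin (ω * s))) -
        G 0 * √(2 * h) * (Ψ₁ * cos (ω * s) - Ψ₂ * sin (ω * s)) := fun s => by ring
  simp_rw [key]
  rw [intervalIntegral.integral_sub (hc.intervalIntegrable _ _)
    (Continuous.intervalIntegrable (by fun_prop) _ _), intervalIntegral.integral_const_mul,
    integral_weight_eq_zero hω, mul_zero, sub_zero, avgDrift]

/-- The recentred `G` vanishes like `√(2ℏ)` at `ℏ = 0`, which compensates the square-root
singularity: its product with `√(2ℏ)` is Lipschitz in `ℏ`. -/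
theorem abs_centered_sub_le {r ω : ℝ} {K : NNReal} {G : C(Set.Icc (-r) (0 : ℝ), ℝ) → ℝ}
    (hG : LipschitzWith K G) {h₁ h₂ : ℝ} (hh₁ : 0 ≤ h₁) (hh₂ : 0 ≤ h₂) (s : ℝ) :
    |(G (orbitSeg r ω h₁ s) - G 0) * √(2 * h₁) - (G (orbitSeg r ω h₂ s) - G 0) * √(2 * h₂)| ≤
      2 * K * |h₁ - h₂| := by
  have e₁ : |G (orbitSeg r ω h₁ s) - G 0| ≤ K * √(2 * h₁) :=
    (hG.dist_le_mul _ _).trans (by gcongr; exact dist_orbitSeg_zero_le r ω h₁ s)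
  have e₂ : |G (orbitSeg r ω h₁ s) - G (orbitSeg r ω h₂ s)| ≤ K * |√(2 * h₁) - √(2 * h₂)| :=
    (hG.dist_le_mul _ _).trans (by gcongr; exact dist_orbitSeg_le r ω h₁ h₂ s)
  have q₁ : √(2 * h₁) ^ 2 = 2 * h₁ := sq_sqrt (by positivity)
  have q₂ : √(2 * h₂) ^ 2 = 2 * h₂ := sq_sqrt (by positivity)
  have p₁ : 0 ≤ √(2 * h₁) := sqrt_nonneg _
  have p₂ : 0 ≤ √(2 * h₂) := sqrt_nonneg _
  have hsq : |√(2 * h₁) - √(2 * h₂)| * (√(2 * h₁) + √(2 * h₂)) = 2 * |h₁ - h₂| := by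
    rw [← abs_of_nonneg (add_nonneg p₁ p₂), ← abs_mul, ← abs_two (α := ℝ), ← abs_mul, abs_two]
    congr 1
    linear_combination q₁ - q₂
  generalize √(2 * h₁) = a at *
  generalize √(2 * h₂) = b at *
  generalize G (orbitSeg r ω h₁ s) = x at *
  generalize G (orbitSeg r ω h₂ s) = y at *
  calc |(x - G 0) * a - (y - G 0) * b| = |(x - G 0) * (a - b) + (x - y) * b| := by ring_nf
    _ ≤ |x - G 0| * |a - b| + |x - y| * b := by
        refine (abs_add_le _ _).trans ?_
        rw [abs_mul, abs_mul, abs_of_nonneg p₂]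
    _ ≤ (K * a) * |a - b| + (K * |a - b|) * b := by gcongr
    _ = 2 * K * |h₁ - h₂| := by linear_combination (K : ℝ) * hsq

theorem abs_weight_le (ω Ψ₁ Ψ₂ s : ℝ) :
    |Ψ₁ * cos (ω * s) - Ψ₂ * sin (ω * s)| ≤ |Ψ₁| + |Ψ₂| := by
  refine (abs_sub _ _).trans ?_
  rw [abs_mul, abs_mul]
  exact add_le_add (mul_le_of_le_one_right (abs_nonneg _) (abs_cos_le_one _))
    (mul_le_of_le_one_right (abs_nonneg _) (abs_sin_le_one _))

/-- If `G` is Lipschitz on `C([−r,0],ℝ)` then the averaged drift `b₂` is Lipschitz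
continuous on `[0, H*]`. -/
theorem stmt_9 (r ω Hstar : ℝ) (hr : 0 < r) (hω : 0 < ω) (hH : 0 < Hstar)
    (Ψ₁ Ψ₂ : ℝ) (K : NNReal) (G : C(Set.Icc (-r) (0 : ℝ), ℝ) → ℝ)
    (hG : LipschitzWith K G) :
    ∃ C : ℝ, ∀ h₁ ∈ Set.Icc (0 : ℝ) Hstar, ∀ h₂ ∈ Set.Icc (0 : ℝ) Hstar,
      |avgDrift r ω Ψ₁ Ψ₂ G h₁ - avgDrift r ω Ψ₁ Ψ₂ G h₂| ≤ C * |h₁ - h₂| := by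
  refine ⟨2 * K * (|Ψ₁| + |Ψ₂|), fun h₁ hh₁ h₂ hh₂ => ?_⟩
  have hT : 0 < 2 * π / ω := by positivity
  have hc : ∀ h, Continuous fun s =>
      (G (orbitSeg r ω h s) - G 0) * √(2 * h) * (Ψ₁ * cos (ω * s) - Ψ₂ * sin (ω * s)) :=
    fun h => (((hG.continuous.comp (continuous_orbitSeg r ω h)).sub continuous_const).mul
      continuous_const).mul (by fun_prop)
  rw [avgDrift_eq_centered hω Ψ₁ Ψ₂ hG.continuous, avgDrift_eq_centered hω Ψ₁ Ψ₂ hG.continuous,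
    ← mul_sub, ← intervalIntegral.integral_sub
      ((hc h₁).intervalIntegrable _ _) ((hc h₂).intervalIntegrable _ _), abs_mul,
    abs_of_pos (one_div_pos.2 hT)]
  have hI := intervalIntegral.norm_integral_le_of_norm_le_const
    (a := 0) (b := 2 * π / ω) (C := 2 * K * |h₁ - h₂| * (|Ψ₁| + |Ψ₂|))
    (f := fun s =>
      (G (orbitSeg r ω h₁ s) - G 0) * √(2 * h₁) * (Ψ₁ * cos (ω * s) - Ψ₂ * sin (ω * s)) -
      (G (orbitSeg r ω h₂ s) - G 0) * √(2 * h₂) * (Ψ₁ * cos (ω * s) - Ψ₂ * sin (ω * s)))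
    (fun s _ => by
      rw [← sub_mul, norm_mul]
      exact mul_le_mul (abs_centered_sub_le hG hh₁.1 hh₂.1 s) (abs_weight_le ω Ψ₁ Ψ₂ s)
        (norm_nonneg _) (by positivity))
  rw [sub_zero, abs_of_pos hT, Real.norm_eq_abs] at hI
  refine (mul_le_mul_of_nonneg_left hI (one_div_pos.2 hT).le).trans (le_of_eq ?_)
  field_simp
end

section
/- For every continuous 𝔉 : [0,H*] → ℝ and every u₀ ∈ ℝ there exists a function u : [0,H*] → ℝ which is continuously differentiable on [0,H*] and twice continuously differentiable on (0,H*), satisfies u(0) = u₀ and b_H(ℏ)·u'(ℏ) + (κ_d·ℏ/2)·u''(ℏ) = 𝔉(ℏ) for all ℏ ∈ (0,H*); this u is the unique function in C([0,H*]) that is twice differentiable on (0,H*), satisfies the equation on (0,H*), and has value u₀ at 0. Moreover there is a constant C, independent of 𝔉 and u₀, such that sup_{[0,H*]} |u| ≤ |u₀| + C·sup_{[0,H*]} |𝔉|. -/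
/-!
Dividing by `κ_d x / 2`, the equation for `p = u'` reads `p' + (1/x + g) p = 2 F / (κ_d x)` with
`g x = 2 b₂ x / (κ_d x)`. Since `|b₂ x| ≤ M x`, the function `g` is bounded, so
`A x = exp (∫₀ˣ g)` is continuous and bounded above and below on `[0, H*]`, and `x A x` is an
integrating factor: `(x A p)' = (2 / κ_d) A F` (`exists_integratingFactor`,
`hasDerivAt_mul_integratingFactor`).

Existence: with `G x = ∫₀ˣ (2 / κ_d) A F`, take `p = (G x / x) / A x`, extended to `x = 0` by the
derivative of `G` there. This is continuous up to `0`, and `u = u₀ + ∫₀ˣ p`. The bounds on `A` give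
`|G x| ≤ const * sup |F| * x`, hence a bound on `p` and on `u - u₀`.

Uniqueness: the difference `w` of two solutions satisfies `x A w' = c` on `(0, H*)`. If `c ≠ 0`,
then `w'` is at least of the size of `1/x`, so `w` diverges logarithmically at `0`, which
contradicts continuity (`nonpos_of_mul_deriv_eq`). Thus `c = 0` and `w` is constant.
-/

/-- `v` solves `b_H v' + (κ_d ℏ/2) v'' = 𝔉` on `(0,H*)` (twice differentiable there). -/
def SolvesDegODE (κd Hstar : ℝ) (b₂ F v : ℝ → ℝ) : Prop :=
  ∃ v' v'' : ℝ → ℝ, ∀ x ∈ Set.Ioo (0 : ℝ) Hstar,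
    HasDerivAt v (v' x) x ∧ HasDerivAt v' (v'' x) x ∧
    (κd / 2 + b₂ x) * v' x + κd * x / 2 * v'' x = F x

open Set Filter Topology MeasureTheory

/-- The function `A = exp (∫₀ g)` with `g x = 2 b₂ x / (κ x)`, with its two-sided bound on
`[0, H]`. -/
lemma exists_integratingFactor {H κ M : ℝ} (hH : 0 < H) (hκ : 0 < κ) {b₂ : ℝ → ℝ}
    (hc : ContinuousOn b₂ (Icc 0 H)) (hb : ∀ x ∈ Icc (0 : ℝ) H, |b₂ x| ≤ M * x) :
    ∃ A : ℝ → ℝ, Continuous A ∧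
      (∀ x ∈ Icc (0 : ℝ) H,
        Real.exp (-(2 * M / κ * H)) ≤ A x ∧ A x ≤ Real.exp (2 * M / κ * H)) ∧
      (∀ x, 0 < A x) ∧
      ∀ x ∈ Ioo (0 : ℝ) H, HasDerivAt A (2 * b₂ x / (κ * x) * A x) x := by
  have hM : 0 ≤ M := by
    have := (abs_nonneg _).trans (hb H ⟨hH.le, le_rfl⟩)
    exact nonneg_of_mul_nonneg_left this hH
  -- Precomposing with the projection onto `[0, H]` makes `g` globally bounded and measurable.
  set c : ℝ → ℝ := fun x => max 0 (min H x) with hcdef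
  have hcc : Continuous c := by fun_prop
  have hcm : ∀ x, c x ∈ Icc 0 H := fun x =>
    ⟨le_max_left _ _, max_le hH.le (min_le_left _ _)⟩
  have hcid : ∀ x ∈ Icc (0 : ℝ) H, c x = x := fun x hx => by
    simp [hcdef, min_eq_right hx.2, max_eq_right hx.1]
  have hbc : Continuous fun x => b₂ (c x) := hc.comp_continuous hcc hcm
  set g : ℝ → ℝ := fun x => 2 * b₂ (c x) / (κ * c x) with hg
  have hgm : Measurable g := by
    exact (hbc.measurable.const_mul 2).div (hcc.measurable.const_mul κ)
  have hgb : ∀ x, ‖g x‖ ≤ 2 * M / κ := by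
    intro x
    rcases (hcm x).1.eq_or_lt with h0 | h0
    · simp only [hg, ← h0, mul_zero, div_zero, norm_zero]
      positivity
    · have := hb _ (hcm x)
      rw [hg, Real.norm_eq_abs, abs_div, abs_mul, abs_of_pos (mul_pos hκ h0),
        abs_of_pos (two_pos : (0 : ℝ) < 2), div_le_div_iff₀ (mul_pos hκ h0) hκ]
      nlinarith [mul_le_mul_of_nonneg_left this hκ.le]
  have hgi : ∀ a b : ℝ, IntervalIntegrable g volume a b := fun a b =>
    (intervalIntegrable_const (c := 2 * M / κ)).mono_fun hgm.aestronglyMeasurable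
      (Eventually.of_forall fun x => (hgb x).trans (le_abs_self _))
  have hBb : ∀ x ∈ Icc (0 : ℝ) H, |∫ t in (0 : ℝ)..x, g t| ≤ 2 * M / κ * H := by
    intro x hx
    have h1 := intervalIntegral.norm_integral_le_of_norm_le_const (a := 0) (b := x)
      (f := g) (C := 2 * M / κ) (fun t _ => hgb t)
    rw [sub_zero, abs_of_nonneg hx.1] at h1
    exact h1.trans (mul_le_mul_of_nonneg_left hx.2 (by positivity))
  refine ⟨fun x => Real.exp (∫ t in (0 : ℝ)..x, g t),
    Real.continuous_exp.comp (intervalIntegral.continuous_primitive hgi 0), fun x hx => ?_,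
    fun x => Real.exp_pos _, fun x hx => ?_⟩
  · have := abs_le.1 (hBb x hx)
    exact ⟨Real.exp_le_exp.2 this.1, Real.exp_le_exp.2 this.2⟩
  · have hcx : c x = x := hcid x (Ioo_subset_Icc_self hx)
    have hca : ContinuousAt g x := by
      refine ContinuousAt.div (hbc.const_mul 2).continuousAt (hcc.const_mul κ).continuousAt ?_
      rw [hcx]
      exact (mul_pos hκ hx.1).ne'
    have h := (intervalIntegral.integral_hasDerivAt_right (hgi 0 x)
      (hgm.stronglyMeasurable.stronglyMeasurableAtFilter) hca).exp
    have hgx : g x = 2 * b₂ x / (κ * x) := by simp only [hg, hcx]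
    rw [hgx, mul_comm] at h
    exact h

/-- Multiplying the equation by `2 A / κ` turns its left-hand side into `(x A p)'`. -/
lemma hasDerivAt_mul_integratingFactor {κ x b p' f : ℝ} (hκ : 0 < κ) (hx : 0 < x)
    {A p : ℝ → ℝ} (hA : HasDerivAt A (2 * b / (κ * x) * A x) x) (hp : HasDerivAt p p' x)
    (heq : (κ / 2 + b) * p x + κ * x / 2 * p' = f) :
    HasDerivAt (fun y => y * A y * p y) (2 / κ * (A x * f)) x := by
  have h := ((hasDerivAt_id x).mul hA).mul hp
  refine h.congr_deriv ?_
  rw [← heq]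
  simp only [id, Pi.mul_apply]
  field_simp

/-- If `x A w' = c` on `(0, H)` with `A` positive and bounded and `w` has a finite limit at `0`,
then `c ≤ 0`: otherwise `w` would dominate a multiple of `log` near `0`. -/
lemma nonpos_of_mul_deriv_eq {H K c : ℝ} (hH : 0 < H) {A w w' : ℝ → ℝ}
    (hA0 : ∀ x, 0 < A x) (hAK : ∀ x ∈ Icc (0 : ℝ) H, A x ≤ K)
    (hw : ContinuousOn w (Icc 0 H)) (hd : ∀ x ∈ Ioo (0 : ℝ) H, HasDerivAt w (w' x) x)
    (hcw : ∀ x ∈ Ioo (0 : ℝ) H, x * A x * w' x = c) : c ≤ 0 := by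
  by_contra! hc
  have hK : 0 < K := (hA0 0).trans_le (hAK 0 ⟨le_rfl, hH.le⟩)
  have hderiv : ∀ x ∈ Ioo (0 : ℝ) H,
      HasDerivAt (fun y => w y - c / K * Real.log y) (w' x - c / K * x⁻¹) x := fun x hx =>
    (hd x hx).sub ((Real.hasDerivAt_log hx.1.ne').const_mul _)
  have hmono : MonotoneOn (fun y => w y - c / K * Real.log y) (Ioo 0 H) := by
    refine monotoneOn_of_deriv_nonneg (convex_Ioo _ _)
      (fun x hx => (hderiv x hx).continuousAt.continuousWithinAt)
      (fun x hx => ?_) (fun x hx => ?_) <;> rw [interior_Ioo] at hx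
    · exact (hderiv x hx).differentiableAt.differentiableWithinAt
    · rw [(hderiv x hx).deriv, sub_nonneg]
      have hxA : 0 < x * A x := mul_pos hx.1 (hA0 x)
      have hwx : w' x = c / (x * A x) := by
        rw [eq_div_iff hxA.ne', mul_comm]
        exact hcw x hx
      have hle : x * A x ≤ K * x := by
        rw [mul_comm K]
        exact mul_le_mul_of_nonneg_left (hAK x (Ioo_subset_Icc_self hx)) hx.1.le
      rw [hwx, ← div_eq_mul_inv, div_div]
      exact div_le_div_of_nonneg_left hc.le hxA hle
  have hw0 : Tendsto w (𝓝[>] 0) (𝓝 (w 0)) := by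
    have := hw 0 ⟨le_rfl, hH.le⟩
    exact (this.mono_of_mem_nhdsWithin (Icc_mem_nhdsGT hH))
  have hlog : Tendsto (fun y => w y - c / K * Real.log y) (𝓝[>] 0) atTop := by
    have h1 : Tendsto (fun y => -(c / K * Real.log y)) (𝓝[>] 0) atTop :=
      tendsto_neg_atBot_atTop.comp
        (Real.tendsto_log_nhdsGT_zero.const_mul_atBot (div_pos hc hK))
    simpa [sub_eq_add_neg] using hw0.add_atTop h1
  have hev := hlog.eventually_gt_atTop (w (H / 2) - c / K * Real.log (H / 2))
  obtain ⟨y, hy, hy2⟩ := (hev.and (Ioo_mem_nhdsGT (half_pos hH))).exists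
  exact absurd (hmono ⟨hy2.1, hy2.2.trans (half_lt_self hH)⟩
    ⟨half_pos hH, half_lt_self hH⟩ hy2.2.le) (not_le.2 hy)

/-- Paper's Lemma 8.1.  With `b_H = κ_d/2 + b₂`, `|b₂(ℏ)| ≤ M·ℏ` and `σ_H² = κ_d ℏ`,
for every continuous `𝔉` on `[0,H*]` and every `u₀` there is a solution `u` of
`b_H u' + (κ_d ℏ/2) u'' = 𝔉` on `(0,H*)` which is `C¹` on `[0,H*]`, `C²` on `(0,H*)`,
with `u(0) = u₀`; it is unique among continuous functions on `[0,H*]` that are twice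
differentiable solutions on `(0,H*)` and have value `u₀` at `0`; and
`sup|u| ≤ |u₀| + C·sup|𝔉|` with `C` independent of `𝔉` and `u₀`. -/
theorem stmt_10 (Hstar κd M : ℝ) (hH : 0 < Hstar) (hκ : 0 < κd)
    (b₂ : ℝ → ℝ) (hb₂c : ContinuousOn b₂ (Set.Icc 0 Hstar))
    (hb₂ : ∀ x ∈ Set.Icc (0 : ℝ) Hstar, |b₂ x| ≤ M * x) :
    ∃ C : ℝ, 0 ≤ C ∧
      ∀ F : ℝ → ℝ, ContinuousOn F (Set.Icc 0 Hstar) → ∀ u₀ : ℝ,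
        ∃ u u' u'' : ℝ → ℝ,
          u 0 = u₀ ∧
          ContinuousOn u (Set.Icc 0 Hstar) ∧
          (∀ x ∈ Set.Icc (0 : ℝ) Hstar, HasDerivWithinAt u (u' x) (Set.Icc 0 Hstar) x) ∧
          ContinuousOn u' (Set.Icc 0 Hstar) ∧
          (∀ x ∈ Set.Ioo (0 : ℝ) Hstar, HasDerivAt u (u' x) x ∧ HasDerivAt u' (u'' x) x) ∧
          ContinuousOn u'' (Set.Ioo 0 Hstar) ∧
          (∀ x ∈ Set.Ioo (0 : ℝ) Hstar,
            (κd / 2 + b₂ x) * u' x + κd * x / 2 * u'' x = F x) ∧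
          (∀ v : ℝ → ℝ, ContinuousOn v (Set.Icc 0 Hstar) → v 0 = u₀ →
            SolvesDegODE κd Hstar b₂ F v → ∀ x ∈ Set.Icc (0 : ℝ) Hstar, v x = u x) ∧
          (∀ MF : ℝ, (∀ x ∈ Set.Icc (0 : ℝ) Hstar, |F x| ≤ MF) →
            ∀ x ∈ Set.Icc (0 : ℝ) Hstar, |u x| ≤ |u₀| + C * MF) := by
  obtain ⟨A, hAc, hAb, hA0, hAd⟩ := exists_integratingFactor hH hκ hb₂c hb₂
  set K : ℝ := Real.exp (2 * M / κd * Hstar) with hKdef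
  have hK0 : 0 < K := Real.exp_pos _
  refine ⟨2 / κd * K * K * Hstar, by positivity, fun F hF u₀ => ?_⟩
  -- `F` is extended continuously by constants so that the primitives below live on all of `ℝ`.
  set F' : ℝ → ℝ := fun x => F (max 0 (min Hstar x)) with hF'
  have hF'c : Continuous F' := hF.comp_continuous (by fun_prop) fun x =>
    ⟨le_max_left _ _, max_le hH.le (min_le_left _ _)⟩
  have hF'e : ∀ x ∈ Icc (0 : ℝ) Hstar, F' x = F x := fun x hx => by
    simp [hF', min_eq_right hx.2, max_eq_right hx.1]
  have hfc : Continuous fun x => 2 / κd * (A x * F' x) := by fun_prop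
  set G : ℝ → ℝ := fun x => ∫ t in (0 : ℝ)..x, 2 / κd * (A t * F' t) with hG
  have hGd : ∀ x, HasDerivAt G (2 / κd * (A x * F' x)) x := fun x =>
    intervalIntegral.integral_hasDerivAt_right (hfc.intervalIntegrable _ _)
      hfc.stronglyMeasurable.stronglyMeasurableAtFilter hfc.continuousAt
  have hG0 : G 0 = 0 := intervalIntegral.integral_same
  -- `dslope G 0` is `G x / x`, completed at `0` by `G' 0`.
  set p : ℝ → ℝ := fun x => dslope G 0 x / A x with hp
  have hds : Continuous (dslope G 0) := by
    rw [continuous_iff_continuousAt]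
    intro x
    rcases eq_or_ne x 0 with rfl | hx
    · exact continuousAt_dslope_same.2 (hGd 0).differentiableAt
    · exact (continuousAt_dslope_of_ne hx).2 (hGd x).continuousAt
  have hpc : Continuous p := hds.div hAc fun x => (hA0 x).ne'
  have hpe : ∀ x, x ≠ 0 → p x = G x / (x * A x) := fun x hx => by
    simp only [hp, dslope_of_ne G hx, slope_def_field, hG0, sub_zero, div_div]
  set q : ℝ → ℝ := fun x => (F x - (κd / 2 + b₂ x) * p x) / (κd * x / 2) with hq
  have hpq : ∀ x ∈ Ioo (0 : ℝ) Hstar, HasDerivAt p (q x) x := by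
    intro x hx
    have hx0 : x ≠ 0 := hx.1.ne'
    have hAx : A x ≠ 0 := (hA0 x).ne'
    have h := (hGd x).div ((hasDerivAt_id x).mul (hAd x hx)) (mul_ne_zero hx0 hAx)
    have he : p =ᶠ[𝓝 x] (G / (id * A)) := by
      filter_upwards [isOpen_ne.mem_nhds hx0] with y hy
      exact hpe y hy
    refine (h.congr_of_eventuallyEq he).congr_deriv ?_
    simp only [hq, hpe x hx0, hF'e x (Ioo_subset_Icc_self hx), id, Pi.mul_apply]
    field_simp
  set u : ℝ → ℝ := fun x => u₀ + ∫ t in (0 : ℝ)..x, p t with hu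
  have hud : ∀ x, HasDerivAt u (p x) x := fun x =>
    (intervalIntegral.integral_hasDerivAt_right (hpc.intervalIntegrable _ _)
      hpc.stronglyMeasurable.stronglyMeasurableAtFilter hpc.continuousAt).const_add _
  have huc : Continuous u := continuous_iff_continuousAt.2 fun x => (hud x).continuousAt
  have hu0 : u 0 = u₀ := by simp [hu]
  have hueq : ∀ x ∈ Ioo (0 : ℝ) Hstar, (κd / 2 + b₂ x) * p x + κd * x / 2 * q x = F x := by
    intro x hx
    have : κd * x / 2 ≠ 0 := by have := mul_pos hκ hx.1; positivity
    simp only [hq]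
    rw [mul_div_cancel₀ _ this]
    ring
  refine ⟨u, p, q, hu0, huc.continuousOn, fun x _ => (hud x).hasDerivWithinAt, hpc.continuousOn,
    fun x hx => ⟨hud x, hpq x hx⟩, ?_, hueq, ?_, ?_⟩
  · have hF1 := hF.mono (Ioo_subset_Icc_self (a := (0 : ℝ)) (b := Hstar))
    have hb1 := hb₂c.mono (Ioo_subset_Icc_self (a := (0 : ℝ)) (b := Hstar))
    refine ContinuousOn.div (hF1.sub ((continuousOn_const.add hb1).mul hpc.continuousOn))
      (by fun_prop) fun x hx => ?_
    have := mul_pos hκ hx.1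
    positivity
  · rintro v hv hv0 ⟨v', v'', hsol⟩
    have hwc : ContinuousOn (fun x => v x - u x) (Icc 0 Hstar) := hv.sub huc.continuousOn
    have hwd : ∀ x ∈ Ioo (0 : ℝ) Hstar,
        HasDerivAt (fun x => v x - u x) (v' x - p x) x := fun x hx =>
      (hsol x hx).1.sub (hud x)
    have hzd : ∀ x ∈ Ioo (0 : ℝ) Hstar,
        HasDerivAt (fun y => y * A y * (v' y - p y)) 0 x := by
      intro x hx
      have h := hasDerivAt_mul_integratingFactor (p := fun y => v' y - p y) (f := 0) hκ hx.1
        (hAd x hx) ((hsol x hx).2.1.sub (hpq x hx))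
        (by linear_combination (hsol x hx).2.2 - hueq x hx)
      simpa using h
    obtain ⟨c, hc⟩ : ∃ c, ∀ x ∈ Ioo (0 : ℝ) Hstar, x * A x * (v' x - p x) = c :=
      isOpen_Ioo.exists_is_const_of_deriv_eq_zero isPreconnected_Ioo
        (fun x hx => (hzd x hx).differentiableAt.differentiableWithinAt)
        (fun x hx => (hzd x hx).deriv)
    have hc0 : c = 0 := by
      refine le_antisymm
        (nonpos_of_mul_deriv_eq hH hA0 (fun x hx => (hAb x hx).2) hwc hwd hc) ?_
      have := nonpos_of_mul_deriv_eq (c := -c) hH hA0 (fun x hx => (hAb x hx).2) hwc.neg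
        (fun x hx => (hwd x hx).neg) (fun x hx => by rw [← hc x hx]; ring)
      linarith
    have hw'0 : ∀ x ∈ Ioo (0 : ℝ) Hstar, v' x - p x = 0 := fun x hx => by
      have h := hc x hx
      rw [hc0] at h
      exact (mul_eq_zero.1 h).resolve_left (mul_pos hx.1 (hA0 x)).ne'
    intro x hx
    rcases hx.1.eq_or_lt with rfl | hx0
    · rw [hv0, hu0]
    · obtain ⟨y, hy, hy'⟩ := exists_hasDerivAt_eq_slope (fun x => v x - u x)
        (fun x => v' x - p x) hx0 (hwc.mono (Icc_subset_Icc_right hx.2))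
        (fun y hy => hwd y ⟨hy.1, hy.2.trans_le hx.2⟩)
      rw [hw'0 y ⟨hy.1, hy.2.trans_le hx.2⟩, hv0, hu0, eq_comm,
        div_eq_zero_iff] at hy'
      rcases hy' with h | h <;> linarith
  · intro MF hMF x hx
    have hMF0 : 0 ≤ MF := (abs_nonneg _).trans (hMF 0 ⟨le_rfl, hH.le⟩)
    have hGb : ∀ y ∈ Icc (0 : ℝ) Hstar, |G y| ≤ 2 / κd * (K * MF) * y := by
      intro y hy
      have h1 := intervalIntegral.norm_integral_le_of_norm_le_const (a := 0) (b := y)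
        (f := fun t => 2 / κd * (A t * F' t)) (C := 2 / κd * (K * MF)) (fun t ht => by
          rw [uIoc_of_le hy.1] at ht
          have ht' : t ∈ Icc (0 : ℝ) Hstar := ⟨ht.1.le, ht.2.trans hy.2⟩
          rw [Real.norm_eq_abs, hF'e t ht', abs_mul, abs_mul, abs_of_pos (hA0 t),
            abs_of_pos (div_pos two_pos hκ)]
          have := hMF t ht'
          have := (hAb t ht').2
          gcongr)
      rwa [sub_zero, abs_of_nonneg hy.1] at h1
    have hpb : ∀ y ∈ Ioc (0 : ℝ) Hstar, ‖p y‖ ≤ 2 / κd * K * K * MF := by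
      intro y hy
      have hy' : y ∈ Icc (0 : ℝ) Hstar := Ioc_subset_Icc_self hy
      have hKA : 1 ≤ K * A y := by
        have h1 := (hAb y hy').1
        rw [Real.exp_neg, ← hKdef] at h1
        calc (1 : ℝ) = K * K⁻¹ := (mul_inv_cancel₀ hK0.ne').symm
          _ ≤ K * A y := mul_le_mul_of_nonneg_left h1 hK0.le
      have hyA : 0 < y * A y := mul_pos hy.1 (hA0 y)
      rw [hpe y hy.1.ne', Real.norm_eq_abs, abs_div, abs_of_pos hyA, div_le_iff₀ hyA]
      have hnn : 0 ≤ 2 / κd * (K * MF) * y := by have := hy.1; positivity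
      calc |G y| ≤ 2 / κd * (K * MF) * y * 1 := by rw [mul_one]; exact hGb y hy'
        _ ≤ 2 / κd * (K * MF) * y * (K * A y) := mul_le_mul_of_nonneg_left hKA hnn
        _ = 2 / κd * K * K * MF * (y * A y) := by ring
    have h1 := intervalIntegral.norm_integral_le_of_norm_le_const (a := 0) (b := x)
      (f := p) (C := 2 / κd * K * K * MF) (fun t ht => by
        rw [uIoc_of_le hx.1] at ht
        exact hpb t ⟨ht.1, ht.2.trans hx.2⟩)
    rw [sub_zero, abs_of_nonneg hx.1, Real.norm_eq_abs] at h1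
    calc |u x| ≤ |u₀| + |∫ t in (0 : ℝ)..x, p t| := abs_add_le _ _
      _ ≤ |u₀| + 2 / κd * K * K * MF * x := by gcongr
      _ ≤ |u₀| + 2 / κd * K * K * MF * Hstar := by
        have := hx.2
        gcongr
      _ = |u₀| + 2 / κd * K * K * Hstar * MF := by ring
end

section
/- If f : [0,H*] → ℝ is continuous on [0,H*], twice continuously differentiable on (0,H*), and the function ℏ ↦ b_H(ℏ)·f'(ℏ) + (κ_d·ℏ/2)·f''(ℏ) on (0,H*) extends to a continuous function on [0,H*], then f is continuously differentiable on [0,H*] (in particular f' extends continuously to the endpoint 0). -/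
/-!
Near `0` the equation `g = (κd / 2 + b₂) f' + (κd x / 2) f''` is a singular first-order linear
equation for `f'`. Since `|b₂ x| ≤ M x`, the quotient `β x = 2 b₂ x / (κd x)` is bounded, so it has
a primitive `B` continuous on `[0, Hstar]`, and `x * exp (B x)` is an integrating factor:
`(x * exp (B x) * f' x)' = h x` with `h = (2 / κd) * exp B * g` continuous on `[0, Hstar]`.
Hence `x * exp (B x) * f' x = C + G x`, where `G x` is the integral of `h` over `[0, x]`.

* At `Hstar` this identity gives a finite limit of `f'`, because `Hstar > 0`.
* At `0` it gives `x * f' x → exp (-B 0) * C`. A nonzero limit would make `f` diverge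
  logarithmically (`eq_zero_of_tendsto_mul_deriv`), so `C = 0`, and L'Hôpital's rule applied to
  `G x / x` gives a finite limit of `f'`.

A continuous function whose derivative has one-sided limits at the endpoints is `C¹` up to the
endpoints (`exists_C1_extension`).
-/

open Set Filter Topology MeasureTheory

lemma exists_primitive {H K : ℝ} (hH : 0 < H) {φ : ℝ → ℝ} (hφ : ContinuousOn φ (Ioo 0 H))
    (hK : ∀ x ∈ Ioo 0 H, |φ x| ≤ K) :
    ∃ Φ : ℝ → ℝ, ContinuousOn Φ (Icc 0 H) ∧ Φ 0 = 0 ∧ ∀ x ∈ Ioo 0 H, HasDerivAt Φ (φ x) x := by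
  have hi : IntegrableOn φ (Icc 0 H) := by
    rw [integrableOn_Icc_iff_integrableOn_Ioo]
    refine IntegrableOn.of_bound (by simp) (hφ.aestronglyMeasurable measurableSet_Ioo) K ?_
    filter_upwards [ae_restrict_mem measurableSet_Ioo] with x hx
    exact hK x hx
  refine ⟨fun x => ∫ t in (0 : ℝ)..x, φ t, ?_, by simp, fun x hx => ?_⟩
  · have := intervalIntegral.continuousOn_primitive_interval (μ := volume) (f := φ) (a := 0) (b := H)
      (by rwa [uIcc_of_le hH.le])
    rwa [uIcc_of_le hH.le] at this
  · refine intervalIntegral.integral_hasDerivAt_right ?_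
      (hφ.stronglyMeasurableAtFilter isOpen_Ioo x hx) (hφ.continuousAt (isOpen_Ioo.mem_nhds hx))
    rw [intervalIntegrable_iff_integrableOn_Icc_of_le hx.1.le]
    exact hi.mono_set (Icc_subset_Icc_right hx.2.le)

/-- L'Hôpital's rule applied to `x * f x / x` compares the limits of `f x + x * f' x` and `f x`. -/
lemma eq_zero_of_tendsto_mul_deriv {H c l : ℝ} (hH : 0 < H) {f f' : ℝ → ℝ}
    (hf' : ∀ x ∈ Ioo 0 H, HasDerivAt f (f' x) x) (hf : Tendsto f (𝓝[>] 0) (𝓝 l))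
    (hc : Tendsto (fun x => x * f' x) (𝓝[>] 0) (𝓝 c)) : c = 0 := by
  have hid : Tendsto (fun x : ℝ => x) (𝓝[>] 0) (𝓝 0) := tendsto_id.mono_left nhdsWithin_le_nhds
  have key := HasDerivAt.lhopital_zero_right_on_Ioo (f := fun x => x * f x)
    (f' := fun x => 1 * f x + x * f' x) (g := fun x => x) (g' := fun _ => 1) (l := 𝓝 (l + c)) hH
    (fun x hx => (hasDerivAt_id x).mul (hf' x hx)) (fun x _ => hasDerivAt_id x) (by simp)
    (by simpa using hid.mul hf) hid (by simpa using hf.add hc)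
  have h2 : Tendsto f (𝓝[>] 0) (𝓝 (l + c)) := by
    refine key.congr' ?_
    filter_upwards [self_mem_nhdsWithin] with x hx
    have : x ≠ 0 := ne_of_gt hx
    field_simp
  linarith [tendsto_nhds_unique hf h2]

lemma exists_C1_extension {H l₀ l₁ : ℝ} (hH : 0 < H) {f f' : ℝ → ℝ}
    (hf : ContinuousOn f (Icc 0 H)) (hf' : ∀ x ∈ Ioo 0 H, HasDerivAt f (f' x) x)
    (hc : ContinuousOn f' (Ioo 0 H)) (h₀ : Tendsto f' (𝓝[>] 0) (𝓝 l₀))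
    (h₁ : Tendsto f' (𝓝[<] H) (𝓝 l₁)) :
    ∃ D : ℝ → ℝ, ContinuousOn D (Icc 0 H) ∧ (∀ x ∈ Ioo 0 H, D x = f' x) ∧
      ∀ x ∈ Icc 0 H, HasDerivWithinAt f (D x) (Icc 0 H) x := by
  have hD : ∀ x ∈ Ioo 0 H, extendFrom (Ioo 0 H) f' x = f' x := fun x hx =>
    extendFrom_eq (subset_closure hx) (hc x hx)
  have hdiff : DifferentiableOn ℝ f (Ioo 0 H) := fun x hx =>
    (hf' x hx).differentiableAt.differentiableWithinAt
  refine ⟨extendFrom (Ioo 0 H) f', continuousOn_Icc_extendFrom_Ioo hc h₀ h₁, hD, ?_⟩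
  intro x hx
  rcases hx.1.eq_or_lt with rfl | h0
  · rw [eq_lim_at_left_extendFrom_Ioo hH h₀]
    refine (hasDerivWithinAt_Ici_of_tendsto_deriv hdiff ((hf 0 hx).mono Ioo_subset_Icc_self)
      (Ioo_mem_nhdsGT hH) (h₀.congr' ?_)).mono Icc_subset_Ici_self
    filter_upwards [Ioo_mem_nhdsGT hH] with y hy using (hf' y hy).deriv.symm
  rcases hx.2.eq_or_lt with rfl | h1
  · rw [eq_lim_at_right_extendFrom_Ioo hH h₁]
    refine (hasDerivWithinAt_Iic_of_tendsto_deriv hdiff ((hf x hx).mono Ioo_subset_Icc_self)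
      (Ioo_mem_nhdsLT hH) (h₁.congr' ?_)).mono Icc_subset_Iic_self
    filter_upwards [Ioo_mem_nhdsLT hH] with y hy using (hf' y hy).deriv.symm
  · rw [hD x ⟨h0, h1⟩]
    exact (hf' x ⟨h0, h1⟩).hasDerivWithinAt


/-- Paper's Lemma 8.2.  With `b_H = κ_d/2 + b₂`, `|b₂(ℏ)| ≤ M·ℏ`: if `f` is
continuous on `[0,H*]`, twice continuously differentiable on `(0,H*)`, and
`ℏ ↦ b_H(ℏ)f'(ℏ) + (κ_d ℏ/2)f''(ℏ)` extends continuously to `[0,H*]`, then `f`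
is continuously differentiable on all of `[0,H*]` (in particular `f'` extends
continuously to the endpoint `0`). -/
theorem stmt_11 (Hstar κd M : ℝ) (hH : 0 < Hstar) (hκ : 0 < κd)
    (b₂ : ℝ → ℝ) (hb₂c : ContinuousOn b₂ (Set.Icc 0 Hstar))
    (hb₂ : ∀ x ∈ Set.Icc (0 : ℝ) Hstar, |b₂ x| ≤ M * x)
    (f f' f'' : ℝ → ℝ)
    (hf : ContinuousOn f (Set.Icc 0 Hstar))
    (hf' : ∀ x ∈ Set.Ioo (0 : ℝ) Hstar, HasDerivAt f (f' x) x)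
    (hf'' : ∀ x ∈ Set.Ioo (0 : ℝ) Hstar, HasDerivAt f' (f'' x) x)
    (hf''c : ContinuousOn f'' (Set.Ioo 0 Hstar))
    (g : ℝ → ℝ) (hg : ContinuousOn g (Set.Icc 0 Hstar))
    (hge : ∀ x ∈ Set.Ioo (0 : ℝ) Hstar,
      g x = (κd / 2 + b₂ x) * f' x + κd * x / 2 * f'' x) :
    ∃ D : ℝ → ℝ, ContinuousOn D (Set.Icc 0 Hstar) ∧
      (∀ x ∈ Set.Ioo (0 : ℝ) Hstar, D x = f' x) ∧
      ∀ x ∈ Set.Icc (0 : ℝ) Hstar, HasDerivWithinAt f (D x) (Set.Icc 0 Hstar) x := by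
  have hsub : Ioo 0 Hstar ⊆ Icc 0 Hstar := Ioo_subset_Icc_self
  obtain ⟨B, hBc, -, hB⟩ := exists_primitive hH (φ := fun x => 2 * b₂ x / (κd * x))
    (K := 2 * M / κd)
    ((continuousOn_const.mul (hb₂c.mono hsub)).div (by fun_prop)
      fun x hx => (mul_pos hκ hx.1).ne')
    (fun x hx => by
      have hpos := mul_pos hκ hx.1
      rw [abs_div, abs_mul, abs_of_pos hpos, abs_two, div_le_div_iff₀ hpos hκ]
      nlinarith [hb₂ x (hsub hx)])
  set h : ℝ → ℝ := fun x => 2 / κd * (Real.exp (B x) * g x) with h_def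
  have hhc : ContinuousOn h (Icc 0 Hstar) := continuousOn_const.mul (hBc.rexp.mul hg)
  obtain ⟨K, hK⟩ := isCompact_Icc.exists_bound_of_continuousOn hhc
  obtain ⟨G, hGc, hG0, hG⟩ := exists_primitive hH (hhc.mono hsub) (fun x hx => hK x (hsub hx))
  -- The integrating factor turns the equation into `(x * exp B * f' - G)' = 0`.
  have hw : ∀ x ∈ Ioo 0 Hstar,
      HasDerivAt (fun x => x * Real.exp (B x) * f' x - G x) 0 x := by
    intro x hx
    have hx0 : x ≠ 0 := hx.1.ne'
    have hκ0 : κd ≠ 0 := hκ.ne'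
    refine ((((hasDerivAt_id x).mul (hB x hx).exp).mul (hf'' x hx)).sub (hG x hx)).congr_deriv ?_
    simp only [h_def, hge x hx, id]
    simp only [Pi.mul_apply, id]
    field_simp
    ring
  obtain ⟨C, hC⟩ : ∃ C, ∀ x ∈ Ioo 0 Hstar, x * Real.exp (B x) * f' x - G x = C :=
    isOpen_Ioo.exists_is_const_of_deriv_eq_zero isPreconnected_Ioo
      (fun x hx => (hw x hx).differentiableAt.differentiableWithinAt)
      (fun x hx => (hw x hx).deriv)
  have hsol : ∀ x ∈ Ioo 0 Hstar, x * f' x = Real.exp (-B x) * (C + G x) := by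
    intro x hx
    rw [← hC x hx, Real.exp_neg]
    field_simp
    ring
  have left : ∀ {u : ℝ → ℝ}, ContinuousOn u (Icc 0 Hstar) → Tendsto u (𝓝[>] 0) (𝓝 (u 0)) :=
    fun hu => ((hu 0 (left_mem_Icc.2 hH.le)).mono hsub).tendsto.mono_left
      (nhdsWithin_Ioo_eq_nhdsGT hH).ge
  have right : ∀ {u : ℝ → ℝ}, ContinuousOn u (Icc 0 Hstar) →
      Tendsto u (𝓝[<] Hstar) (𝓝 (u Hstar)) :=
    fun hu => ((hu Hstar (right_mem_Icc.2 hH.le)).mono hsub).tendsto.mono_left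
      (nhdsWithin_Ioo_eq_nhdsLT hH).ge
  have hRc : ContinuousOn (fun x => Real.exp (-B x) * (C + G x)) (Icc 0 Hstar) :=
    hBc.neg.rexp.mul (continuousOn_const.add hGc)
  have hC0 : C = 0 := by
    have := eq_zero_of_tendsto_mul_deriv hH hf' (left hf) ((left hRc).congr' (by
      filter_upwards [Ioo_mem_nhdsGT hH] with x hx using (hsol x hx).symm))
    simpa [hG0, (Real.exp_pos _).ne'] using this
  have hGdiv : Tendsto (fun x => G x / x) (𝓝[>] 0) (𝓝 (h 0)) :=
    HasDerivAt.lhopital_zero_right_on_Ioo (g := fun x => x) (g' := fun _ => 1) hH hG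
      (fun x _ => hasDerivAt_id x) (by simp) (by simpa [hG0] using left hGc)
      (tendsto_id.mono_left nhdsWithin_le_nhds) (by simpa using left hhc)
  refine exists_C1_extension (l₀ := Real.exp (-B 0) * h 0)
    (l₁ := Real.exp (-B Hstar) * (C + G Hstar) / Hstar) hH hf hf'
    (fun x hx => (hf'' x hx).continuousAt.continuousWithinAt) ?_ ?_
  · refine ((left hBc.neg.rexp).mul hGdiv).congr' ?_
    filter_upwards [Ioo_mem_nhdsGT hH] with x hx
    have := hsol x hx
    rw [hC0, zero_add] at this
    rw [← mul_div_assoc, div_eq_iff hx.1.ne', mul_comm (f' x), this, Pi.neg_apply]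
  · refine ((right hRc).div (tendsto_id.mono_left nhdsWithin_le_nhds) hH.ne').congr' ?_
    filter_upwards [Ioo_mem_nhdsLT hH] with x hx
    simp only [id, Pi.div_apply]
    rw [div_eq_iff hx.1.ne', mul_comm (f' x), hsol x hx]
end

section
/- Fix ν ∈ (0,1). For every f_H : [0,H*] → ℝ that is continuous on [0,H*], twice continuously differentiable on (0,H*), and such that ℒ_H f_H := b_H f_H' + (κ_d·ℏ/2) f_H'' extends to a continuous function on [0,H*], there exists a family (f^ε)_{ε∈(0,1)} of four times continuously differentiable functions on [0,H*] such that: (1) sup_{[0,H*]} |f^ε − f_H| → 0 as ε → 0; (2) sup_{[0,H*]} |ℒ_H f^ε − ℒ_H f_H| → 0 as ε → 0; and (3) there is a constant C with max_{0≤k≤4} sup_{[0,H*]} |(f^ε)^{(k)}| ≤ C·ε^{−ν} for all ε ∈ (0,1). -/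
/-!
With `s = 2/κ_d` and the integrating factor `p = exp (s ∫₀ β)`, the operator takes divergence form:
`(x p f')' = s p ℒf`. Hence on `(0,H*)` one has `x p f_H' = G + c`, where `G` is the antiderivative
of `s p ℒf_H` vanishing at `0`. If `c ≠ 0`, then `f_H'` is of size `1/x` near `0` and `f_H` diverges
logarithmically, against its continuity; so `c = 0` (`flux_const_eq_zero`).

By Weierstrass, pick a polynomial `q` uniformly close to `s p ℒf_H`, and let `Q` be the polynomial
with `(X Q)' = q`. The function `φ` with `φ 0 = f_H 0` and `φ' = Q/p` is `C⁴`, satisfies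
`ℒφ = q/(s p)`, and `φ' - f_H' = (x Q - G)/(x p)`, where `|x Q - G| ≤ x sup |q - s p ℒf_H|`. So `φ`
and `ℒφ` are uniformly close to `f_H` and `ℒf_H` (`exists_smooth_approx`).

This yields a sequence `φ n` of approximations, each with some finite `C⁴` bound `M n`. The growth
`ε^{-ν}` comes from reparametrization alone: take `f^ε = φ (N ε)` with `N ε → ∞` so slowly that
`M (N ε) ≤ C ε^{-ν}` (`exists_slow_index`).
-/

/-! ### Antiderivatives -/

lemma exists_antideriv {H : ℝ} (hH : 0 < H) {g : ℝ → ℝ} (hg : ContinuousOn g (Set.Icc 0 H)) :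
    ∃ F : ℝ → ℝ, F 0 = 0 ∧ ∀ x ∈ Set.Icc 0 H, HasDerivAt F (g x) x := by
  -- Extending `g` continuously to `ℝ` makes the derivative two-sided at the endpoints as well.
  have hc : Continuous (Set.IccExtend hH.le ((Set.Icc 0 H).domRestrict g)) :=
    hg.domRestrict.Icc_extend'
  refine ⟨fun x => ∫ t in (0 : ℝ)..x, Set.IccExtend hH.le ((Set.Icc 0 H).domRestrict g) t,
    by simp, fun x hx => ?_⟩
  have h := (hc.integral_hasStrictDerivAt 0 x).hasDerivAt
  rwa [Set.IccExtend_of_mem _ _ hx] at h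

lemma contDiffOn_succ_of_hasDerivAt {H : ℝ} (hH : 0 < H) {n : ℕ} {F g : ℝ → ℝ}
    (hF : ∀ x ∈ Set.Icc 0 H, HasDerivAt F (g x) x)
    (hg : ContDiffOn ℝ n g (Set.Icc 0 H)) : ContDiffOn ℝ (n + 1) F (Set.Icc 0 H) := by
  have hu := uniqueDiffOn_Icc hH
  rw [contDiffOn_succ_iff_derivWithin hu]
  refine ⟨fun x hx => (hF x hx).differentiableAt.differentiableWithinAt, by simp, ?_⟩
  exact hg.congr fun x hx => (hF x hx).hasDerivWithinAt.derivWithin (hu x hx)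

lemma exists_X_mul_antideriv (q : Polynomial ℝ) :
    ∃ Q : Polynomial ℝ, Polynomial.derivative (Polynomial.X * Q) = q := by
  induction q using Polynomial.induction_on' with
  | add p q hp hq =>
    obtain ⟨P, rfl⟩ := hp
    obtain ⟨Q, rfl⟩ := hq
    exact ⟨P + Q, by rw [mul_add, Polynomial.derivative_add]⟩
  | monomial n a =>
    refine ⟨Polynomial.monomial n (a / (n + 1)), ?_⟩
    rw [Polynomial.X_mul_monomial, Polynomial.derivative_monomial]
    have : (n : ℝ) + 1 ≠ 0 := by positivity
    push_cast
    rw [div_mul_cancel₀ _ this]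

lemma abs_le_mul_of_deriv {H M : ℝ} {F F' : ℝ → ℝ} (h0 : F 0 = 0)
    (hc : ContinuousOn F (Set.Icc 0 H)) (hd : ∀ x ∈ Set.Ioo 0 H, HasDerivAt F (F' x) x)
    (hM : ∀ x ∈ Set.Ioo 0 H, |F' x| ≤ M) : ∀ x ∈ Set.Icc 0 H, |F x| ≤ M * x := by
  intro x hx
  rcases hx.1.eq_or_lt with rfl | hx0
  · simp [h0]
  obtain ⟨y, hy, hy'⟩ := exists_hasDerivAt_eq_slope F F' hx0
    (hc.mono (Set.Icc_subset_Icc_right hx.2)) (fun y hy => hd y ⟨hy.1, hy.2.trans_le hx.2⟩)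
  have h := hM y ⟨hy.1, hy.2.trans_le hx.2⟩
  rw [hy', h0, sub_zero, sub_zero, abs_div, abs_of_pos hx0, div_le_iff₀ hx0] at h
  exact h

/-! ### Vanishing flux at the degenerate endpoint -/

/-- A continuous `f` on `[0,H]` has no flux `x p f'` through the degenerate endpoint `0`: otherwise
`f` would diverge like `log x`. -/
lemma flux_const_eq_zero {H M m R c : ℝ} (hH : 0 < H) {f f' p G : ℝ → ℝ}
    (hf : ContinuousOn f (Set.Icc 0 H)) (hf' : ∀ x ∈ Set.Ioo 0 H, HasDerivAt f (f' x) x)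
    (hm : 0 < m) (hp : ∀ x ∈ Set.Icc 0 H, m ≤ p x ∧ p x ≤ R)
    (hG : ∀ x ∈ Set.Icc 0 H, |G x| ≤ M * x)
    (hflux : ∀ x ∈ Set.Ioo 0 H, x * p x * f' x = G x + c) : c = 0 := by
  by_contra hc
  have hR : 0 < R := by
    have := hp 0 ⟨le_rfl, hH.le⟩
    linarith
  have hM : 0 ≤ M := by
    have h := (abs_nonneg _).trans (hG H ⟨hH.le, le_rfl⟩)
    exact nonneg_of_mul_nonneg_left h hH
  have hc2 : 0 < c ^ 2 := by positivity
  set a := c ^ 2 / R with ha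
  have ha0 : 0 < a := by positivity
  set K := |c| * M / m with hK
  have hK0 : 0 ≤ K := by positivity
  obtain ⟨A, hA⟩ := isCompact_Icc.exists_bound_of_continuousOn hf
  have hA0 : 0 ≤ A := (norm_nonneg _).trans (hA 0 ⟨le_rfl, hH.le⟩)
  set b := H / 2 with hb
  have hb0 : 0 < b := by positivity
  have hbH : b < H := by linarith
  -- The lower bound `c f' ≥ a/x - K`, kept free of any case distinction on the sign of `c`.
  have hder : ∀ y ∈ Set.Ioo 0 H, a / y - K ≤ c * f' y := by
    intro y hy
    obtain ⟨hpm, hpR⟩ := hp y ⟨hy.1.le, hy.2.le⟩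
    have hp0 : 0 < p y := hm.trans_le hpm
    have hy0 := hy.1
    have e : c * f' y = c * G y / (y * p y) + c ^ 2 / (y * p y) := by
      have := hflux y hy
      rw [← add_div, eq_div_iff (by positivity)]
      linear_combination c * this
    have h1 : a / y ≤ c ^ 2 / (y * p y) := by
      rw [ha, div_div, mul_comm R y]
      gcongr
    have h2 : |c * G y / (y * p y)| ≤ K := by
      rw [abs_div, abs_mul, abs_of_pos (mul_pos hy0 hp0), div_le_iff₀ (by positivity)]
      calc |c| * |G y| ≤ |c| * (M * y) := by gcongr; exact hG y ⟨hy.1.le, hy.2.le⟩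
        _ = K * (y * m) := by rw [hK]; field_simp
        _ ≤ K * (y * p y) := by gcongr
    rw [e]
    have := neg_le_of_abs_le h2
    linarith
  have key : ∀ x ∈ Set.Ioo 0 b, -a * Real.log x ≤ 2 * |c| * A + K * b - a * Real.log b := by
    intro x hx
    have hsub : Set.Icc x b ⊆ Set.Icc 0 H := Set.Icc_subset_Icc hx.1.le hbH.le
    obtain ⟨y, hy, hy'⟩ := exists_hasDerivAt_eq_slope
      (fun x => c * f x - a * Real.log x + K * x) (fun y => c * f' y - a * y⁻¹ + K * 1) hx.2
      (by
        refine ((continuousOn_const.mul (hf.mono hsub)).sub (continuousOn_const.mul ?_)).add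
          (by fun_prop)
        exact Real.continuousOn_log.mono fun y hy => (hx.1.trans_le hy.1).ne')
      (fun y hy => (((hf' y ⟨hx.1.trans hy.1, hy.2.trans hbH⟩).const_mul c).sub
        ((Real.hasDerivAt_log (hx.1.trans hy.1).ne').const_mul a)).add
        ((hasDerivAt_id y).const_mul K))
    have h0 := hder y ⟨hx.1.trans hy.1, hy.2.trans hbH⟩
    have h1 : 0 ≤ c * f' y - a * y⁻¹ + K * 1 := by
      rw [← div_eq_mul_inv]; linarith
    rw [hy'] at h1
    have h2 := nonneg_of_mul_nonneg_left (by rwa [div_eq_mul_inv] at h1)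
      (inv_pos.2 (sub_pos.2 hx.2))
    have bd : ∀ z ∈ Set.Icc 0 H, |c * f z| ≤ |c| * A := fun z hz => by
      rw [abs_mul]; exact mul_le_mul_of_nonneg_left (hA z hz) (abs_nonneg _)
    have h3 := (abs_le.1 (bd b ⟨hb0.le, hbH.le⟩)).2
    have h4 := (abs_le.1 (bd x ⟨hx.1.le, (hx.2.trans hbH).le⟩)).1
    have h5 : 0 ≤ K * x := mul_nonneg hK0 hx.1.le
    linarith
  set D := 2 * |c| * A + K * b - a * Real.log b with hD
  set T := max (1 - Real.log b) ((D + 1) / a) with hT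
  have hTb : Real.exp (-T) < b := by
    rw [← Real.lt_log_iff_exp_lt hb0]
    have := le_max_left (1 - Real.log b) ((D + 1) / a)
    linarith
  have h := key (Real.exp (-T)) ⟨Real.exp_pos _, hTb⟩
  rw [Real.log_exp] at h
  have h' : (D + 1) / a ≤ T := le_max_right _ _
  rw [div_le_iff₀ ha0] at h'
  linarith

/-! ### Approximation in the graph norm -/

/-- Arbitrarily good `C⁴` approximation in the graph norm of the operator, with no control on the
derivatives. -/
lemma exists_smooth_approx {H κ : ℝ} (hH : 0 < H) (hκ : 0 < κ)
    {β : ℝ → ℝ} (hβ : ContDiffOn ℝ 4 β (Set.Icc 0 H))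
    {f f' f'' g : ℝ → ℝ} (hf : ContinuousOn f (Set.Icc 0 H))
    (hf' : ∀ x ∈ Set.Ioo (0 : ℝ) H, HasDerivAt f (f' x) x)
    (hf'' : ∀ x ∈ Set.Ioo (0 : ℝ) H, HasDerivAt f' (f'' x) x)
    (hg : ContinuousOn g (Set.Icc 0 H))
    (hgeq : ∀ x ∈ Set.Ioo (0 : ℝ) H, g x = (κ / 2 + x * β x) * f' x + κ * x / 2 * f'' x)
    {η : ℝ} (hη : 0 < η) :
    ∃ φ : ℝ → ℝ, ContDiffOn ℝ 4 φ (Set.Icc 0 H) ∧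
      (∀ x ∈ Set.Icc 0 H, |φ x - f x| ≤ η) ∧
      ∀ x ∈ Set.Icc 0 H, |((κ / 2 + x * β x) * iteratedDerivWithin 1 φ (Set.Icc 0 H) x +
        κ * x / 2 * iteratedDerivWithin 2 φ (Set.Icc 0 H) x) - g x| ≤ η := by
  have hu := uniqueDiffOn_Icc hH
  obtain ⟨B, -, hB⟩ := exists_antideriv hH hβ.continuousOn
  set s := 2 / κ with hs
  have hs0 : 0 < s := by positivity
  set p : ℝ → ℝ := fun x => Real.exp (s * B x) with hpdef
  have hp0 : ∀ x, 0 < p x := fun x => Real.exp_pos _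
  have hpd : ∀ x ∈ Set.Icc 0 H, HasDerivAt p (p x * (s * β x)) x := fun x hx =>
    ((hB x hx).const_mul s).exp
  have hBc : ContDiffOn ℝ 4 B (Set.Icc 0 H) :=
    contDiffOn_succ_of_hasDerivAt (n := 3) hH hB (hβ.of_le (by norm_num))
  have hpc : ContDiffOn ℝ 4 p (Set.Icc 0 H) := (contDiffOn_const.mul hBc).exp
  have hne : (Set.Icc 0 H).Nonempty := ⟨0, le_rfl, hH.le⟩
  obtain ⟨x₁, -, hx₁⟩ := isCompact_Icc.exists_isMinOn hne hpc.continuousOn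
  obtain ⟨x₂, -, hx₂⟩ := isCompact_Icc.exists_isMaxOn hne hpc.continuousOn
  set m := p x₁ with hm
  have hm0 : 0 < m := hp0 _
  have hpm : ∀ x ∈ Set.Icc 0 H, m ≤ p x ∧ p x ≤ p x₂ := fun x hx => ⟨hx₁ hx, hx₂ hx⟩
  have hspg : ContinuousOn (fun x => s * p x * g x) (Set.Icc 0 H) :=
    (continuousOn_const.mul hpc.continuousOn).mul hg
  obtain ⟨G, hG0, hG⟩ := exists_antideriv hH hspg
  have hGc : ContinuousOn G (Set.Icc 0 H) := fun x hx => (hG x hx).continuousAt.continuousWithinAt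
  obtain ⟨M, hM⟩ := isCompact_Icc.exists_bound_of_continuousOn hspg
  have hGM : ∀ x ∈ Set.Icc 0 H, |G x| ≤ M * x :=
    abs_le_mul_of_deriv hG0 hGc (fun x hx => hG x (Set.Ioo_subset_Icc_self hx))
      fun x hx => hM x (Set.Ioo_subset_Icc_self hx)
  have hw : ∀ x ∈ Set.Ioo 0 H, HasDerivAt (fun x => x * p x * f' x - G x) 0 x := by
    intro x hx
    have hx' := Set.Ioo_subset_Icc_self hx
    refine ((((hasDerivAt_id' x).fun_mul (hpd x hx')).fun_mul (hf'' x hx)).fun_sub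
      (hG x hx')).congr_deriv ?_
    rw [hgeq x hx, hs]
    field_simp
    ring
  obtain ⟨c, hc⟩ := isOpen_Ioo.exists_is_const_of_deriv_eq_zero isPreconnected_Ioo
    (fun x hx => (hw x hx).differentiableAt.differentiableWithinAt) (fun x hx => (hw x hx).deriv)
  have hc0 : c = 0 := flux_const_eq_zero hH hf hf' hm0 hpm hGM
    (fun x hx => by have := hc x hx; linarith)
  have hflux : ∀ x ∈ Set.Ioo 0 H, x * p x * f' x = G x := fun x hx => by
    have := hc x hx; linarith
  set η' := η * m / (κ / 2 + H) with hη'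
  have hη'0 : 0 < η' := by positivity
  obtain ⟨q, hq⟩ := exists_polynomial_near_of_continuousOn 0 H _ hspg η' hη'0
  obtain ⟨Q, hQ⟩ := exists_X_mul_antideriv q
  have hqQ : ∀ x, q.eval x = Q.eval x + x * (Polynomial.derivative Q).eval x := fun x => by
    rw [← hQ]; simp [Polynomial.derivative_mul]
  have hQc : ContDiffOn ℝ 4 (fun x => Q.eval x) (Set.Icc 0 H) := by
    exact (Polynomial.contDiff_aeval (𝕜 := ℝ) Q 4).contDiffOn.congr fun x _ => by
      simp [Polynomial.aeval_def]
  have hφ'c : ContDiffOn ℝ 4 (fun x => Q.eval x / p x) (Set.Icc 0 H) :=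
    hQc.div hpc fun x _ => (hp0 x).ne'
  obtain ⟨Φ, hΦ0, hΦ⟩ := exists_antideriv hH hφ'c.continuousOn
  set φ : ℝ → ℝ := fun x => f 0 + Φ x with hφdef
  have hφ : ∀ x ∈ Set.Icc 0 H, HasDerivAt φ (Q.eval x / p x) x := fun x hx =>
    (hΦ x hx).const_add _
  have hφ4 : ContDiffOn ℝ 4 φ (Set.Icc 0 H) :=
    contDiffOn_succ_of_hasDerivAt (n := 3) hH hφ (hφ'c.of_le (by norm_num))
  refine ⟨φ, hφ4, ?_, ?_⟩
  · have hXQ : ∀ x ∈ Set.Icc 0 H, |x * Q.eval x - G x| ≤ η' * x := by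
      have hd : ∀ x ∈ Set.Icc 0 H,
          HasDerivAt (fun x => x * Q.eval x - G x) (q.eval x - s * p x * g x) x := by
        intro x hx
        have h := ((Polynomial.X * Q).hasDerivAt x).sub (hG x hx)
        rw [hQ] at h
        refine h.congr_of_eventuallyEq (Filter.Eventually.of_forall fun y => ?_)
        simp
      exact abs_le_mul_of_deriv (by simp [hG0])
        (fun x hx => (hd x hx).continuousAt.continuousWithinAt)
        (fun x hx => hd x (Set.Ioo_subset_Icc_self hx))
        fun x hx => (hq x (Set.Ioo_subset_Icc_self hx)).le
    have hdiff : ∀ x ∈ Set.Ioo 0 H, |Q.eval x / p x - f' x| ≤ η' / m := by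
      intro x hx
      have hx' := Set.Ioo_subset_Icc_self hx
      have hx0 := hx.1
      have e : Q.eval x / p x - f' x = (x * Q.eval x - G x) / (x * p x) := by
        rw [← hflux x hx]
        have := (hp0 x).ne'
        field_simp
      rw [e, abs_div, abs_of_pos (mul_pos hx0 (hp0 x)), div_le_div_iff₀ (mul_pos hx0 (hp0 x)) hm0]
      calc _ ≤ η' * x * m := by gcongr; exact hXQ x hx'
        _ ≤ η' * (x * p x) := by rw [mul_assoc]; gcongr; exact (hpm x hx').1
    intro x hx
    have h := abs_le_mul_of_deriv (F := fun x => φ x - f x) (by simp [hφdef, hΦ0])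
      (hφ4.continuousOn.sub hf)
      (fun x hx => (hφ x (Set.Ioo_subset_Icc_self hx)).sub (hf' x hx)) hdiff x hx
    refine h.trans ?_
    calc η' / m * x ≤ η' / m * (κ / 2 + H) := by gcongr; linarith [hx.2]
      _ = η := by rw [hη']; field_simp
  · intro x hx
    have hφ1 : ∀ y ∈ Set.Icc 0 H, iteratedDerivWithin 1 φ (Set.Icc 0 H) y = Q.eval y / p y :=
      fun y hy => by
        rw [iteratedDerivWithin_one]
        exact (hφ y hy).hasDerivWithinAt.derivWithin (hu y hy)
    have hφ2 : iteratedDerivWithin 2 φ (Set.Icc 0 H) x =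
        ((Polynomial.derivative Q).eval x * p x - Q.eval x * (p x * (s * β x))) / p x ^ 2 := by
      rw [show (2 : ℕ) = 1 + 1 from rfl, iteratedDerivWithin_succ,
        derivWithin_congr hφ1 (hφ1 x hx)]
      exact ((Q.hasDerivAt x).div (hpd x hx) (hp0 x).ne').hasDerivWithinAt.derivWithin (hu x hx)
    have hpx := hp0 x
    have e : ((κ / 2 + x * β x) * iteratedDerivWithin 1 φ (Set.Icc 0 H) x +
        κ * x / 2 * iteratedDerivWithin 2 φ (Set.Icc 0 H) x) - g x =
        κ / 2 * (q.eval x - s * p x * g x) / p x := by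
      rw [hφ1 x hx, hφ2, hqQ, hs]
      field_simp
      ring
    rw [e, abs_div, abs_mul, abs_of_pos hpx, abs_of_pos (half_pos hκ), div_le_iff₀ hpx]
    calc κ / 2 * |q.eval x - s * p x * g x| ≤ (κ / 2 + H) * η' := by
          gcongr
          · linarith
          · exact (hq x hx).le
      _ = η * m := by rw [hη']; field_simp
      _ ≤ η * p x := by gcongr; exact (hpm x hx).1

/-! ### Slow reparametrization and conclusion -/

/-- Any sequence `M` is dominated by `C ε^{-ν}` along an index `N ε` tending slowly to infinity. -/
lemma exists_slow_index {ν : ℝ} (hν : 0 < ν) (M : ℕ → ℝ) :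
    ∃ (N : ℝ → ℕ) (C : ℝ), (∀ ε ∈ Set.Ioo (0 : ℝ) 1, M (N ε) ≤ C * ε ^ (-ν)) ∧
      ∀ k : ℕ, ∃ ε₀ > (0 : ℝ), ∀ ε ∈ Set.Ioo (0 : ℝ) 1, ε < ε₀ → k ≤ N ε := by
  classical
  set C := max 1 (M 0) with hC
  have hC1 : 1 ≤ C := le_max_left _ _
  refine ⟨fun ε => Nat.findGreatest (fun n => M n ≤ C * ε ^ (-ν)) ⌊ε⁻¹⌋₊, C, fun ε hε => ?_,
    fun k => ?_⟩
  · refine Nat.findGreatest_spec (P := fun n => M n ≤ C * ε ^ (-ν)) (Nat.zero_le _) ?_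
    have h1 : 1 ≤ ε ^ (-ν) :=
      Real.one_le_rpow_of_pos_of_le_one_of_nonpos hε.1 hε.2.le (by linarith)
    calc M 0 ≤ C := le_max_right _ _
      _ ≤ C * ε ^ (-ν) := le_mul_of_one_le_right (by linarith) h1
  · have h := ((tendsto_rpow_neg_nhdsGT_zero (neg_lt_zero.2 hν)).eventually_ge_atTop (M k)).and
      ((tendsto_inv_nhdsGT_zero (𝕜 := ℝ)).eventually_ge_atTop (k : ℝ))
    obtain ⟨ε₀, hε₀, h⟩ := mem_nhdsGT_iff_exists_Ioo_subset.1 h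
    refine ⟨ε₀, hε₀, fun ε hε hlt => ?_⟩
    obtain ⟨h1, h2⟩ := h ⟨hε.1, hlt⟩
    refine Nat.le_findGreatest (Nat.le_floor h2) (h1.trans ?_)
    exact le_mul_of_one_le_left (Real.rpow_nonneg hε.1.le _) hC1


/-- Paper's Lemma 8.3.  Fix `ν ∈ (0,1)`, `H* > 0`, `κ_d > 0`, and
`b_H(ℏ) = κ_d/2 + ℏ·β(ℏ)` with `β` four times continuously differentiable on
`[0,H*]`.  For every `f_H` continuous on `[0,H*]`, twice continuously
differentiable on `(0,H*)`, whose image `ℒ_H f_H = b_H f_H' + (κ_d ℏ/2) f_H''`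
extends to a continuous function `LfH` on `[0,H*]`, there exist a family
`(f^ε)_{ε∈(0,1)}` of `C⁴` functions on `[0,H*]` and a constant `C` such that:
(1) `sup|f^ε − f_H| → 0`; (2) `sup|ℒ_H f^ε − ℒ_H f_H| → 0`; (3) all derivatives
of `f^ε` up to order 4 are bounded by `C·ε^{−ν}`. -/
theorem stmt_12 (ν Hstar κd : ℝ) (hν : ν ∈ Set.Ioo (0 : ℝ) 1)
    (hH : 0 < Hstar) (hκ : 0 < κd)
    (β : ℝ → ℝ) (hβ : ContDiffOn ℝ 4 β (Set.Icc 0 Hstar))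
    (fH fH' fH'' LfH : ℝ → ℝ)
    (hfH : ContinuousOn fH (Set.Icc 0 Hstar))
    (hfH' : ∀ x ∈ Set.Ioo (0 : ℝ) Hstar, HasDerivAt fH (fH' x) x)
    (hfH'' : ∀ x ∈ Set.Ioo (0 : ℝ) Hstar, HasDerivAt fH' (fH'' x) x)
    (hfH''c : ContinuousOn fH'' (Set.Ioo 0 Hstar))
    (hLfH : ContinuousOn LfH (Set.Icc 0 Hstar))
    (hLfHeq : ∀ x ∈ Set.Ioo (0 : ℝ) Hstar,
      LfH x = (κd / 2 + x * β x) * fH' x + κd * x / 2 * fH'' x) :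
    ∃ (f : ℝ → ℝ → ℝ) (C : ℝ),
      (∀ ε ∈ Set.Ioo (0 : ℝ) 1, ContDiffOn ℝ 4 (f ε) (Set.Icc 0 Hstar)) ∧
      (∀ δ > (0 : ℝ), ∃ ε₀ > (0 : ℝ), ∀ ε ∈ Set.Ioo (0 : ℝ) 1, ε < ε₀ →
        ∀ x ∈ Set.Icc (0 : ℝ) Hstar, |f ε x - fH x| ≤ δ) ∧
      (∀ δ > (0 : ℝ), ∃ ε₀ > (0 : ℝ), ∀ ε ∈ Set.Ioo (0 : ℝ) 1, ε < ε₀ →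
        ∀ x ∈ Set.Icc (0 : ℝ) Hstar,
          |((κd / 2 + x * β x) * iteratedDerivWithin 1 (f ε) (Set.Icc 0 Hstar) x +
              κd * x / 2 * iteratedDerivWithin 2 (f ε) (Set.Icc 0 Hstar) x) - LfH x| ≤ δ) ∧
      (∀ ε ∈ Set.Ioo (0 : ℝ) 1, ∀ k ≤ 4, ∀ x ∈ Set.Icc (0 : ℝ) Hstar,
        |iteratedDerivWithin k (f ε) (Set.Icc 0 Hstar) x| ≤ C * ε ^ (-ν)) := by
  have hpos : ∀ n : ℕ, (0 : ℝ) < 1 / ((n : ℝ) + 1) := fun n => Nat.one_div_pos_of_nat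
  choose φ hφ4 hφf hφL using fun n : ℕ =>
    exists_smooth_approx hH hκ hβ hfH hfH' hfH'' hLfH hLfHeq (hpos n)
  have hbd : ∀ n k : ℕ, ∃ A : ℝ, k ≤ 4 → ∀ x ∈ Set.Icc 0 Hstar,
      |iteratedDerivWithin k (φ n) (Set.Icc 0 Hstar) x| ≤ A := by
    intro n k
    by_cases hk : k ≤ 4
    · obtain ⟨A, hA⟩ := isCompact_Icc.exists_bound_of_continuousOn
        ((hφ4 n).continuousOn_iteratedDerivWithin (m := k) (by exact_mod_cast hk)
          (uniqueDiffOn_Icc hH))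
      exact ⟨A, fun _ => hA⟩
    · exact ⟨0, fun h => absurd h hk⟩
  choose A hA using hbd
  obtain ⟨N, C, hN, hNlim⟩ := exists_slow_index hν.1
    (fun n => ∑ k ∈ Finset.range 5, |A n k|)
  have hsmall : ∀ δ > (0 : ℝ), ∃ ε₀ > (0 : ℝ), ∀ ε ∈ Set.Ioo (0 : ℝ) 1, ε < ε₀ →
      1 / ((N ε : ℝ) + 1) ≤ δ := by
    intro δ hδ
    obtain ⟨k, hk⟩ := exists_nat_one_div_lt hδ
    obtain ⟨ε₀, hε₀, h⟩ := hNlim k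
    exact ⟨ε₀, hε₀, fun ε hε hlt =>
      (Nat.one_div_le_one_div (h ε hε hlt)).trans hk.le⟩
  refine ⟨fun ε => φ (N ε), C, fun ε _ => hφ4 _, fun δ hδ => ?_, fun δ hδ => ?_,
    fun ε hε k hk x hx => ?_⟩
  · obtain ⟨ε₀, hε₀, h⟩ := hsmall δ hδ
    exact ⟨ε₀, hε₀, fun ε hε hlt x hx => (hφf _ x hx).trans (h ε hε hlt)⟩
  · obtain ⟨ε₀, hε₀, h⟩ := hsmall δ hδ
    exact ⟨ε₀, hε₀, fun ε hε hlt x hx => (hφL _ x hx).trans (h ε hε hlt)⟩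
  · refine (hA (N ε) k hk x hx).trans ((le_abs_self _).trans (le_trans ?_ (hN ε hε)))
    exact Finset.single_le_sum (f := fun k => |A (N ε) k|) (fun _ _ => abs_nonneg _)
      (Finset.mem_range.2 (by omega))
end
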